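/- Let Λ ⊂ ℝ^n be a full-rank lattice, σ_s, σ_w > 0 with σ_s < σ_w, α = σ_s²/(σ_s²+σ_w²) and σ_eff² = σ_s²σ_w²/(σ_s²+σ_w²) (so that √α·σ_s < σ_eff). Then ∫_{V(Λ)} f_{σ_eff}(w) · f_{√α·σ_s}((Λ∖{0}) + w) dw ≤ ∫_{V(Λ)} f_{σ_eff}((Λ∖{0}) + w) · f_{√α·σ_s}(w) dw, where both integrals are over the Voronoi cell of Λ. -/

import Mathlib

open MeasureTheory Real Filter Pointwise
open scoped ENNReal RealInnerProductSpace

noncomputable section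

/-- The (continuous) Gaussian density with parameter `σ` on `ℝⁿ`:
`f_σ(x) = (2πσ²)^{-n/2} exp(-‖x‖²/(2σ²))`. -/
def gaussF (n : ℕ) (σ : ℝ) (x : EuclideanSpace ℝ (Fin n)) : ℝ :=
  (2 * π * σ ^ 2) ^ (-(n : ℝ) / 2) * Real.exp (-‖x‖ ^ 2 / (2 * σ ^ 2))

/-- The Gaussian mass `f_σ(S) = Σ_{y ∈ S} f_σ(y)` of a (countable) set `S ⊆ ℝⁿ`. -/
def gaussMass (n : ℕ) (σ : ℝ) (S : Set (EuclideanSpace ℝ (Fin n))) : ℝ :=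
  ∑' y : S, gaussF n σ y

/-- The Gaussian measure `N(0, σ² Iₙ)` on `ℝⁿ`, given by its density w.r.t. Lebesgue measure. -/
def gaussMeasure (n : ℕ) (σ : ℝ) : Measure (EuclideanSpace ℝ (Fin n)) :=
  volume.withDensity fun x => ENNReal.ofReal (gaussF n σ x)

/-- The coset `S + t` of a set `S ⊆ ℝⁿ`, i.e. `{x | x - t ∈ S}`. -/
def coset (n : ℕ) (S : Set (EuclideanSpace ℝ (Fin n))) (t : EuclideanSpace ℝ (Fin n)) :
    Set (EuclideanSpace ℝ (Fin n)) := {x | x - t ∈ S}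

/-- The Voronoi cell of `S`: `{x | ⟪x,y⟫ ≤ ‖y‖²/2 for all y ∈ S}`. -/
def voronoi (n : ℕ) (S : Set (EuclideanSpace ℝ (Fin n))) : Set (EuclideanSpace ℝ (Fin n)) :=
  {x | ∀ y ∈ S, ⟪x, y⟫ ≤ ‖y‖ ^ 2 / 2}

/-- The inverse error function `err⁻¹_ε(Λ)`: the least `s > 0` such that a standard Gaussian
leaves `s · V(Λ)` with probability at most `ε`. -/
def errInv (n : ℕ) (ε : ℝ) (S : Set (EuclideanSpace ℝ (Fin n))) : ℝ :=
  sInf {s : ℝ | 0 < s ∧ gaussMeasure n 1 ((s • voronoi n S)ᶜ) ≤ ENNReal.ofReal ε}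

/-- The Shannon entropy (in nats) of the discrete Gaussian `D_{S,σ}` supported on `S`,
which assigns mass `f_σ(y)/f_σ(S)` to each `y ∈ S`. -/
def dgEntropy (n : ℕ) (σ : ℝ) (S : Set (EuclideanSpace ℝ (Fin n))) : ℝ :=
  -∑' y : S, (gaussF n σ y / gaussMass n σ S) * Real.log (gaussF n σ y / gaussMass n σ S)

/-- The flatness factor `ε_Λ(σ) = sup_{x ∈ V(Λ)} |V(Λ)·f_σ(Λ+x) − 1|`. -/
def flatness (n : ℕ) (L : Submodule ℤ (EuclideanSpace ℝ (Fin n))) (σ : ℝ) : ℝ :=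
  ⨆ x : voronoi n (L : Set (EuclideanSpace ℝ (Fin n))),
    |ZLattice.covolume L volume *
        gaussMass n σ (coset n (L : Set (EuclideanSpace ℝ (Fin n))) x) - 1|

abbrev nzIdx (n : ℕ) (L : Submodule ℤ (EuclideanSpace ℝ (Fin n))) : Type :=
  ((L : Set (EuclideanSpace ℝ (Fin n))) \ {0} : Set (EuclideanSpace ℝ (Fin n)))

lemma gaussMass_coset (n : ℕ) (L : Submodule ℤ (EuclideanSpace ℝ (Fin n))) (σ : ℝ)
    (w : EuclideanSpace ℝ (Fin n)) :
    gaussMass n σ (coset n ((L : Set (EuclideanSpace ℝ (Fin n))) \ {0}) w)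
      = ∑' x : nzIdx n L, gaussF n σ ((x : EuclideanSpace ℝ (Fin n)) + w) := by
  unfold gaussMass
  let e : nzIdx n L ≃ coset n ((L : Set (EuclideanSpace ℝ (Fin n))) \ {0}) w :=
    { toFun := fun x => ⟨x.1 + w, by
        change x.1 + w - w ∈ (L : Set (EuclideanSpace ℝ (Fin n))) \ {0}
        rw [add_sub_cancel_right]; exact x.2⟩
      invFun := fun y => ⟨y.1 - w, y.2⟩
      left_inv := fun x => by simp
      right_inv := fun y => by simp }
  exact (e.tsum_eq (fun y => gaussF n σ y.1)).symm

lemma summable_gauss (n : ℕ) (L : Submodule ℤ (EuclideanSpace ℝ (Fin n)))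
    [DiscreteTopology L] (c : ℝ) (hc : 0 < c) :
    Summable fun x : nzIdx n L => Real.exp (-c * ‖(x : EuclideanSpace ℝ (Fin n))‖ ^ 2) := by
  set k := Module.finrank ℤ L + 1 with hk
  have h := ZLattice.summable_norm_pow_inv L (2 * k) (by omega)
  have h2 : Summable fun x : nzIdx n L => ‖(x : EuclideanSpace ℝ (Fin n))‖⁻¹ ^ (2 * k) := by
    have hinj : Function.Injective (fun x : nzIdx n L => (⟨x.1, x.2.1⟩ : L)) := by
      intro a b hab
      have hval := congrArg (fun z : L => (z : EuclideanSpace ℝ (Fin n))) hab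
      exact Subtype.ext hval
    have h3 := h.comp_injective hinj
    simpa only [Function.comp_def, Submodule.coe_norm] using h3
  refine Summable.of_nonneg_of_le (fun _ => (Real.exp_pos _).le) (fun x => ?_)
    (h2.mul_left ((k.factorial : ℝ) / c ^ k))
  have hx : 0 < ‖(x : EuclideanSpace ℝ (Fin n))‖ := norm_pos_iff.mpr x.2.2
  set t := ‖(x : EuclideanSpace ℝ (Fin n))‖
  have hp := Real.pow_div_factorial_le_exp (c * t ^ 2) (by positivity) k
  rw [neg_mul, Real.exp_neg]
  have hf : (0 : ℝ) < k.factorial := by exact_mod_cast k.factorial_pos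
  calc (Real.exp (c * t ^ 2))⁻¹ ≤ ((c * t ^ 2) ^ k / k.factorial)⁻¹ := by
        apply inv_anti₀ (by positivity) hp
    _ = _ := by
        rw [mul_pow, ← pow_mul, inv_div, inv_pow]
        field_simp

lemma integrable_gauss (n : ℕ) (c : ℝ) (hc : 0 < c) :
    Integrable fun w : EuclideanSpace ℝ (Fin n) => Real.exp (-c * ‖w‖ ^ 2) := by
  have h := (GaussianFourier.integrable_cexp_neg_mul_sq_norm_add (V := EuclideanSpace ℝ (Fin n))
    (b := (c : ℂ)) (by simpa using hc) 0 0).norm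
  refine h.congr (Filter.Eventually.of_forall fun w => ?_)
  simp only [Complex.norm_exp]
  congr 1
  simp [← Complex.ofReal_pow, ← Complex.ofReal_mul]

lemma gauss_prod_bound (n : ℕ) (a b : ℝ) (ha : 0 < a) (hb : 0 < b) :
    ∃ C c : ℝ, 0 < C ∧ 0 < c ∧ ∀ x w : EuclideanSpace ℝ (Fin n),
      gaussF n a (x + w) * gaussF n b w ≤
        C * Real.exp (-c * ‖x‖ ^ 2) * Real.exp (-c * ‖w‖ ^ 2) := by
  set A := 1 / (2 * a ^ 2) with hA
  set B := 1 / (2 * b ^ 2) with hB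
  have hA0 : 0 < A := by positivity
  have hB0 : 0 < B := by positivity
  refine ⟨(2 * π * a ^ 2) ^ (-(n : ℝ) / 2) * (2 * π * b ^ 2) ^ (-(n : ℝ) / 2), min A B / 4,
    by positivity, by positivity, fun x w => ?_⟩
  unfold gaussF
  rw [mul_mul_mul_comm, mul_assoc (_ * _) (Real.exp (-(min A B / 4) * _)), ← Real.exp_add,
    ← Real.exp_add]
  refine mul_le_mul_of_nonneg_left (Real.exp_le_exp.mpr ?_) (by positivity)
  have e1 : -‖x + w‖ ^ 2 / (2 * a ^ 2) = - (A * ‖x + w‖ ^ 2) := by rw [hA]; ring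
  have e2 : -‖w‖ ^ 2 / (2 * b ^ 2) = - (B * ‖w‖ ^ 2) := by rw [hB]; ring
  rw [e1, e2]
  have hm : 0 < min A B := lt_min hA0 hB0
  have h1 : min A B * ‖x + w‖ ^ 2 ≤ A * ‖x + w‖ ^ 2 :=
    mul_le_mul_of_nonneg_right (min_le_left _ _) (by positivity)
  have h2 : min A B * ‖w‖ ^ 2 ≤ B * ‖w‖ ^ 2 :=
    mul_le_mul_of_nonneg_right (min_le_right _ _) (by positivity)
  have h3 : ‖x‖ ≤ ‖x + w‖ + ‖w‖ := by
    have := norm_sub_le (x + w) w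
    rwa [add_sub_cancel_right] at this
  have h4 : ‖x‖ ^ 2 ≤ 2 * ‖x + w‖ ^ 2 + 2 * ‖w‖ ^ 2 := by
    nlinarith [norm_nonneg x, norm_nonneg w, norm_nonneg (x + w), sq_nonneg (‖x + w‖ - ‖w‖)]
  have h5 : min A B * (‖x‖ ^ 2 + ‖w‖ ^ 2) ≤ min A B * (4 * ‖x + w‖ ^ 2 + 4 * ‖w‖ ^ 2) :=
    mul_le_mul_of_nonneg_left (by nlinarith [sq_nonneg ‖x + w‖, sq_nonneg ‖w‖]) hm.le
  linarith

lemma gaussF_nonneg (n : ℕ) (a : ℝ) (x : EuclideanSpace ℝ (Fin n)) : 0 ≤ gaussF n a x := by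
  unfold gaussF; positivity

lemma gaussF_cont (n : ℕ) (a : ℝ) : Continuous (gaussF n a) := by
  unfold gaussF; fun_prop

lemma gauss_swap (n : ℕ) (a b : ℝ) (hb : 0 < b) (hab : b ≤ a) (u w : EuclideanSpace ℝ (Fin n))
    (h : ‖w‖ ≤ ‖u‖) : gaussF n a w * gaussF n b u ≤ gaussF n a u * gaussF n b w := by
  unfold gaussF
  rw [mul_mul_mul_comm, mul_mul_mul_comm _ (Real.exp (-‖u‖ ^ 2 / (2 * a ^ 2))), ← Real.exp_add, ← Real.exp_add]
  refine mul_le_mul_of_nonneg_left (Real.exp_le_exp.mpr ?_) (by positivity)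
  have h1 : 1 / (2 * a ^ 2) ≤ 1 / (2 * b ^ 2) := by gcongr
  have h2 : ‖w‖ ^ 2 ≤ ‖u‖ ^ 2 := by gcongr
  have := mul_nonneg (sub_nonneg.mpr h1) (sub_nonneg.mpr h2)
  simp only [div_eq_mul_inv, one_mul] at *
  linarith

lemma voronoi_norm_le (n : ℕ) (L : Submodule ℤ (EuclideanSpace ℝ (Fin n)))
    (w x : EuclideanSpace ℝ (Fin n)) (hx : x ∈ L)
    (hw : w ∈ voronoi n (L : Set (EuclideanSpace ℝ (Fin n)))) : ‖w‖ ≤ ‖x + w‖ := by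
  have h := hw (-x) (L.neg_mem hx)
  rw [inner_neg_right, norm_neg] at h
  have h2 := norm_add_sq_real x w
  rw [real_inner_comm] at h2
  refine (sq_le_sq₀ (norm_nonneg _) (norm_nonneg _)).mp ?_
  linarith

lemma swap_main (n : ℕ) (L : Submodule ℤ (EuclideanSpace ℝ (Fin n)))
    [DiscreteTopology L] (a b : ℝ) (hb : 0 < b) (hab : b ≤ a) :
    ∫ w in voronoi n (L : Set (EuclideanSpace ℝ (Fin n))),
        gaussF n a w * gaussMass n b (coset n ((L : Set (EuclideanSpace ℝ (Fin n))) \ {0}) w)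
      ≤ ∫ w in voronoi n (L : Set (EuclideanSpace ℝ (Fin n))),
          gaussMass n a (coset n ((L : Set (EuclideanSpace ℝ (Fin n))) \ {0}) w) *
            gaussF n b w := by
  simp only [gaussMass_coset, ← tsum_mul_left, ← tsum_mul_right]
  obtain ⟨C, c, hC, hc, hbd⟩ := gauss_prod_bound n a b (hb.trans_le hab) hb
  have hS := summable_gauss n L c hc
  have hnn : ∀ (x w : EuclideanSpace ℝ (Fin n)), 0 ≤ gaussF n a (x + w) * gaussF n b w :=
    fun x w => mul_nonneg (gaussF_nonneg ..) (gaussF_nonneg ..)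
  have hsum : ∀ w : EuclideanSpace ℝ (Fin n), Summable fun x : nzIdx n L =>
      gaussF n a ((x : EuclideanSpace ℝ (Fin n)) + w) * gaussF n b w := fun w =>
    Summable.of_nonneg_of_le (fun x => hnn x w) (fun x => hbd x w)
      ((hS.mul_left C).mul_right _)
  have hmeas : MeasurableSet (voronoi n (L : Set (EuclideanSpace ℝ (Fin n)))) := by
    have : voronoi n (L : Set (EuclideanSpace ℝ (Fin n))) =
        ⋂ y ∈ (L : Set (EuclideanSpace ℝ (Fin n))), {x | ⟪x, y⟫ ≤ ‖y‖ ^ 2 / 2} := by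
      ext x; simp [voronoi]
    rw [this]
    refine (isClosed_biInter fun y _ => isClosed_le ?_ ?_).measurableSet <;> fun_prop
  have hcont : Continuous fun w : EuclideanSpace ℝ (Fin n) => ∑' x : nzIdx n L,
      gaussF n a ((x : EuclideanSpace ℝ (Fin n)) + w) * gaussF n b w := by
    refine continuous_tsum (u := fun x : nzIdx n L =>
      C * Real.exp (-c * ‖(x : EuclideanSpace ℝ (Fin n))‖ ^ 2)) (fun x => ?_) (hS.mul_left C)
      (fun x w => ?_)
    · exact ((gaussF_cont n a).comp (by fun_prop)).mul (gaussF_cont n b)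
    · rw [Real.norm_of_nonneg (hnn x w)]
      refine (hbd x w).trans (mul_le_of_le_one_right (by positivity) ?_)
      rw [Real.exp_le_one_iff]
      nlinarith [sq_nonneg ‖w‖]
  have hint : Integrable fun w : EuclideanSpace ℝ (Fin n) => ∑' x : nzIdx n L,
      gaussF n a ((x : EuclideanSpace ℝ (Fin n)) + w) * gaussF n b w := by
    refine ((integrable_gauss n c hc).const_mul
      (∑' x : nzIdx n L, C * Real.exp (-c * ‖(x : EuclideanSpace ℝ (Fin n))‖ ^ 2))).mono'
      hcont.aestronglyMeasurable (Filter.Eventually.of_forall fun w => ?_)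
    rw [Real.norm_of_nonneg (tsum_nonneg fun x : nzIdx n L => hnn x w), ← tsum_mul_right]
    exact (hsum w).tsum_le_tsum (fun x => hbd x w) ((hS.mul_left C).mul_right _)
  refine integral_mono_of_nonneg (Filter.Eventually.of_forall fun w => ?_) hint.integrableOn ?_
  · exact tsum_nonneg fun x => mul_nonneg (gaussF_nonneg ..) (gaussF_nonneg ..)
  · refine (ae_restrict_iff' hmeas).mpr (Filter.Eventually.of_forall fun w hw => ?_)
    have hle : ∀ x : nzIdx n L, gaussF n a w * gaussF n b ((x : EuclideanSpace ℝ (Fin n)) + w) ≤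
        gaussF n a ((x : EuclideanSpace ℝ (Fin n)) + w) * gaussF n b w := fun x =>
      gauss_swap n a b hb hab _ _ (voronoi_norm_le n L w x x.2.1 hw)
    exact (Summable.of_nonneg_of_le
      (fun x => mul_nonneg (gaussF_nonneg ..) (gaussF_nonneg ..)) hle (hsum w)).tsum_le_tsum
        hle (hsum w)

/-- for `σ_s < σ_w` (so `√α·σ_s < σ_eff`),
`∫_{V(Λ)} f_{σ_eff}(w)·f_{√α·σ_s}((Λ∖{0})+w) dw ≤ ∫_{V(Λ)} f_{σ_eff}((Λ∖{0})+w)·f_{√α·σ_s}(w) dw`. -/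
theorem voronoi_integral_swap_inequality (n : ℕ) (L : Submodule ℤ (EuclideanSpace ℝ (Fin n)))
    [DiscreteTopology L] [IsZLattice ℝ L]
    (σs σw : ℝ) (hσs : 0 < σs) (hσw : 0 < σw) (hsw : σs < σw)
    (α σeff : ℝ)
    (hα : α = σs ^ 2 / (σs ^ 2 + σw ^ 2))
    (hσeff : σeff = Real.sqrt (σs ^ 2 * σw ^ 2 / (σs ^ 2 + σw ^ 2))) :
    ∫ w in voronoi n (L : Set (EuclideanSpace ℝ (Fin n))),
        gaussF n σeff w * gaussMass n (Real.sqrt α * σs) (coset n ((L : Set (EuclideanSpace ℝ (Fin n))) \ {0}) w)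
      ≤ ∫ w in voronoi n (L : Set (EuclideanSpace ℝ (Fin n))),
          gaussMass n σeff (coset n ((L : Set (EuclideanSpace ℝ (Fin n))) \ {0}) w) *
            gaussF n (Real.sqrt α * σs) w := by
  have hs : 0 < σs ^ 2 + σw ^ 2 := by positivity
  have hα0 : 0 < α := by rw [hα]; positivity
  refine swap_main n L σeff (Real.sqrt α * σs) (mul_pos (Real.sqrt_pos.mpr hα0) hσs) ?_
  rw [hσeff]
  refine Real.le_sqrt_of_sq_le ?_
  rw [mul_pow, Real.sq_sqrt hα0.le, hα, div_mul_eq_mul_div]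
  gcongr
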